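/- For every inverse temperature β ∈ (0,∞), every exponent q ∈ (0,2) and every range exponent α ∈ (2, 2 + q/2), there exists a constant c_β > 0 (depending only on β, α and q) such that for every integer N ≥ 1, the variance of the height at the origin under the discrete q-SOS long-range chain satisfies c_β N^{(2/q)(α−2)} ≤ Var^{q-SOS}_{N,β,α}[φ(0)]. -/

import Mathlib

noncomputable section

/-- Configurations of the long-range chain of length `N`: integer-valued height functions
on `ℤ` vanishing outside `{-N, …, N}`. -/
def ChainConfig (N : ℕ) : Type :=
  {φ : ℤ → ℤ // ∀ k : ℤ, (N : ℤ) < |k| → φ k = 0}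

/-- Energy `β ∑_{i ≠ j} |φ(i) − φ(j)|^q / |i − j|^α` of a configuration of the long-range
chain with potential exponent `q` and range exponent `α`. -/
def chainEnergy (β α q : ℝ) (φ : ℤ → ℤ) : ℝ :=
  β * ∑' p : ℤ × ℤ,
      if p.1 = p.2 then 0
      else |((φ p.1 - φ p.2 : ℤ) : ℝ)| ^ q / |((p.1 - p.2 : ℤ) : ℝ)| ^ α

/-- Boltzmann weight of a configuration. -/
def chainWeight (β α q : ℝ) (φ : ℤ → ℤ) : ℝ :=
  Real.exp (-chainEnergy β α q φ)

/-- Partition function of the long-range chain. -/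
def chainZ (N : ℕ) (β α q : ℝ) : ℝ :=
  ∑' φ : ChainConfig N, chainWeight β α q φ.val

/-- Mean of the height at the origin. -/
def chainMean (N : ℕ) (β α q : ℝ) : ℝ :=
  (∑' φ : ChainConfig N, ((φ.val 0 : ℤ) : ℝ) * chainWeight β α q φ.val) / chainZ N β α q

/-- Variance of the height at the origin under the long-range chain `μ_{N,β,α}`
(with potential exponent `q`; `q = 2` is the discrete Gaussian chain,
`q ∈ (0,2)` the `q`-SOS chain). -/
def chainVar (N : ℕ) (β α q : ℝ) : ℝ :=
  (∑' φ : ChainConfig N, ((φ.val 0 : ℤ) : ℝ) ^ 2 * chainWeight β α q φ.val) / chainZ N β α q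
    - chainMean N β α q ^ 2

end

/-!
Every plateau `s_x = 1_{[-x, x]}` with `x ≤ N / 2` raises `φ(0)` by one. If a weight `W` satisfies
`W(φ - s_x) W(φ - s_y) ≤ exp(D(x, y)) W(φ) W(φ - s_x - s_y)`, then testing `φ(0)` against
`∑_x (W(φ - s_x) - W(φ))` and applying Cauchy–Schwarz bounds `E[φ(0)²]` from below by
`#X² / ∑_{x, y} (exp(D(x, y)) - 1)`, where `#X` is the number of plateaus.

Such a `D` would be a bound on second differences of the potential, but `|a|^q` is not smooth at
`0`. On each edge crossed by a plateau one therefore splits the Boltzmann factor `f` as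
`g + (f - g)`, where `g` comes from the smooth potential `(a² + A)^{q/2}`, and expands the product.
The expansion retains a fraction at least `exp(-κ)` of the mass in the smooth factors, where `κ` is
the total increase `∑ A^{q/2} / r^α` of the potential. With `γ = (2/q)(α - 2)` and
`A = 1 + r N^{γ - 1}` on edges of length `r`, the cost `κ` stays bounded while `∑_{x, y} D(x, y)` is
of order `N · N^{1 - γ}`, so the variance is at least of order `N² / N^{2 - γ} = N^γ`.
-/

open Finset

section TranslationBound

variable {V ι : Type*} [AddCommGroup V]

theorem sq_sum_sub_le_mul_sum_sum {Y : Finset ι} {w : ℝ} {a : ι → ℝ} {c : ι → ι → ℝ}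
    (h : ∀ x ∈ Y, ∀ y ∈ Y, a x * a y ≤ w * c x y) :
    (∑ x ∈ Y, (a x - w)) ^ 2 ≤ w * ∑ x ∈ Y, ∑ y ∈ Y, (c x y - a x - a y + w) := by
  rw [sq, sum_mul_sum, mul_sum]
  refine sum_le_sum fun x hx => ?_
  rw [mul_sum]
  refine sum_le_sum fun y hy => ?_
  linarith [h x hx y hy]

theorem two_mul_mul_sum_sub_le {Y : Finset ι} {w : ℝ} {a : ι → ℝ} {c : ι → ι → ℝ} (hw : 0 ≤ w)
    (hc : ∀ x ∈ Y, ∀ y ∈ Y, 0 ≤ c x y) (h : ∀ x ∈ Y, ∀ y ∈ Y, a x * a y ≤ w * c x y) (t : ℝ)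
    (θ : ℝ) :
    2 * (θ * (t * ∑ x ∈ Y, (a x - w))) ≤
      θ ^ 2 * ∑ x ∈ Y, ∑ y ∈ Y, (c x y - a x - a y + w) + t ^ 2 * w := by
  have hsq := sq_sum_sub_le_mul_sum_sum h
  have hpos : 0 ≤ ∑ x ∈ Y, ∑ y ∈ Y, (c x y - a x - a y + w) := by
    rcases hw.eq_or_lt with rfl | hw
    · have ha : ∀ x ∈ Y, a x = 0 := fun x hx =>
        mul_self_eq_zero.1 (le_antisymm (by simpa using h x hx x hx) (mul_self_nonneg _))
      exact sum_nonneg fun x hx => sum_nonneg fun y hy => by simp [ha x hx, ha y hy, hc x hx y hy]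
    · exact nonneg_of_mul_nonneg_right ((sq_nonneg _).trans hsq) hw
  refine two_mul_le_add_of_sq_le_mul (by positivity) (by positivity) ?_
  calc (θ * (t * ∑ x ∈ Y, (a x - w))) ^ 2
      = (θ ^ 2 * t ^ 2) * (∑ x ∈ Y, (a x - w)) ^ 2 := by ring
    _ ≤ (θ ^ 2 * t ^ 2) * (w * ∑ x ∈ Y, ∑ y ∈ Y, (c x y - a x - a y + w)) := by gcongr
    _ = _ := by ring

theorem summable_comp_sub {W : V → ℝ} (hW : Summable W) (v : V) : Summable fun φ => W (φ - v) :=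
  (Equiv.subRight v).summable_iff.2 hW

theorem tsum_comp_sub (W : V → ℝ) (v : V) : ∑' φ, W (φ - v) = ∑' φ, W φ :=
  (Equiv.subRight v).tsum_eq W

variable {W : V → ℝ} {h : V →+ ℝ}

theorem summable_mul_of_summable_one_add_sq_mul (hW : ∀ φ, 0 ≤ W φ)
    (hs : Summable fun φ => (1 + h φ ^ 2) * W φ) :
    Summable W ∧ (Summable fun φ => h φ * W φ) ∧ Summable fun φ => h φ ^ 2 * W φ := by
  refine ⟨.of_nonneg_of_le hW (fun φ => ?_) hs, .of_norm_bounded hs fun φ => ?_,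
    .of_nonneg_of_le (fun φ => mul_nonneg (sq_nonneg _) (hW φ)) (fun φ => ?_) hs⟩
  · nlinarith [hW φ, sq_nonneg (h φ)]
  · rw [Real.norm_eq_abs, abs_mul, abs_of_nonneg (hW φ)]
    exact mul_le_mul_of_nonneg_right
      (by nlinarith [sq_nonneg (|h φ| - 1), sq_abs (h φ)]) (hW φ)
  · nlinarith [hW φ]

theorem hasSum_mul_comp_sub_sub_self (hW : Summable W) (hhW : Summable fun φ => h φ * W φ)
    (v : V) : HasSum (fun φ => h φ * (W (φ - v) - W φ)) (h v * ∑' φ, W φ) := by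
  have hshift : HasSum (fun φ => h φ * W (φ - v)) (∑' φ, h φ * W φ + h v * ∑' φ, W φ) := by
    rw [← (Equiv.addRight v).hasSum_iff]
    convert hhW.hasSum.add (hW.hasSum.mul_left (h v)) using 2 with φ
    simp [add_mul]
  simpa only [mul_sub, add_sub_cancel_left] using hshift.sub hhW.hasSum

-- A Hammersley–Chapman–Robbins bound: `h` is tested against the translates of `W` by the `s x`.
theorem two_mul_card_mul_tsum_sub_le_tsum_sq_mul {Y : Finset ι} {s : ι → V} {D : ι → ι → ℝ}
    (hW : ∀ φ, 0 ≤ W φ) (hs : Summable fun φ => (1 + h φ ^ 2) * W φ)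
    (hh : ∀ x ∈ Y, h (s x) = 1)
    (hD : ∀ x ∈ Y, ∀ y ∈ Y, ∀ φ,
      W (φ - s x) * W (φ - s y) ≤ Real.exp (D x y) * (W φ * W (φ - s x - s y))) (θ : ℝ) :
    2 * θ * (#Y * ∑' φ, W φ) - θ ^ 2 * ((∑ x ∈ Y, ∑ y ∈ Y, (Real.exp (D x y) - 1)) * ∑' φ, W φ)
      ≤ ∑' φ, h φ ^ 2 * W φ := by
  obtain ⟨hsum, hsum₁, hsum₂⟩ := summable_mul_of_summable_one_add_sq_mul hW hs
  have hleft : HasSum (fun φ => h φ * ∑ x ∈ Y, (W (φ - s x) - W φ)) (#Y * ∑' φ, W φ) := by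
    simp_rw [mul_sum]
    convert hasSum_sum fun x (_ : x ∈ Y) => hasSum_mul_comp_sub_sub_self hsum hsum₁ (s x) using 1
    rw [sum_congr rfl fun x hx => by rw [hh x hx, one_mul], sum_const, nsmul_eq_mul]
  have hshift : ∀ v, HasSum (fun φ => W (φ - v)) (∑' φ, W φ) := fun v =>
    tsum_comp_sub W v ▸ (summable_comp_sub hsum v).hasSum
  have hright : HasSum (fun φ => ∑ x ∈ Y, ∑ y ∈ Y,
      (Real.exp (D x y) * W (φ - s x - s y) - W (φ - s x) - W (φ - s y) + W φ))
      ((∑ x ∈ Y, ∑ y ∈ Y, (Real.exp (D x y) - 1)) * ∑' φ, W φ) := by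
    simp_rw [sum_mul]
    refine hasSum_sum fun x _ => hasSum_sum fun y _ => ?_
    simp_rw [sub_sub _ (s x)]
    rw [show (Real.exp (D x y) - 1) * ∑' φ, W φ =
      Real.exp (D x y) * ∑' φ, W φ - ∑' φ, W φ - ∑' φ, W φ + ∑' φ, W φ by ring]
    exact ((((hshift (s x + s y)).mul_left _).sub (hshift (s x))).sub (hshift (s y))).add
      hsum.hasSum
  have hle := hasSum_le (fun φ => two_mul_mul_sum_sub_le (hW φ)
    (fun x _ y _ => mul_nonneg (Real.exp_pos (D x y)).le (hW (φ - s x - s y)))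
    (fun x hx y hy => (hD x hx y hy φ).trans_eq (by ring)) (h φ) θ)
    ((hleft.mul_left θ).mul_left 2) ((hright.mul_left (θ ^ 2)).add hsum₂.hasSum)
  linarith

end TranslationBound

section SplitWeight

variable {V E ι : Type*} [DecidableEq E]

/-- The product over `T` of the local weights `f e`, each split as `g e + (f e - g e)`, is a sum
over `S ⊆ T`; this is the summand in which exactly the edges of `S` contribute `g e`. -/
def splitWeight (f g : E → V → ℝ) (T S : Finset E) (φ : V) : ℝ :=
  ∏ e ∈ T, if e ∈ S then g e φ else f e φ - g e φ

variable {f g : E → V → ℝ} {T : Finset E}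

theorem splitWeight_nonneg (hg : ∀ e ∈ T, ∀ φ, 0 ≤ g e φ) (hgf : ∀ e ∈ T, ∀ φ, g e φ ≤ f e φ)
    (S : Finset E) (φ : V) : 0 ≤ splitWeight f g T S φ :=
  prod_nonneg fun e he => by
    split_ifs
    exacts [hg e he φ, sub_nonneg.2 (hgf e he φ)]

theorem sum_splitWeight_filter_subset (f g : E → V → ℝ) (T : Finset E) {R : Finset E} (hR : R ⊆ T)
    (φ : V) :
    ∑ S ∈ T.powerset with R ⊆ S, splitWeight f g T S φ =
      ∏ e ∈ T, if e ∈ R then g e φ else f e φ := by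
  have hsplit : ∀ e, (if e ∈ R then g e φ else f e φ) =
      g e φ + if e ∈ R then 0 else f e φ - g e φ := by
    intro e
    split_ifs <;> ring
  simp_rw [hsplit, prod_add, sum_filter]
  refine sum_congr rfl fun S hS => ?_
  rw [splitWeight, prod_ite, filter_mem_eq_inter, inter_eq_right.2 (mem_powerset.1 hS),
    filter_notMem_eq_sdiff]
  split_ifs with hRS
  · congr 1
    exact prod_congr rfl fun e he => (if_neg fun h => (mem_sdiff.1 he).2 (hRS h)).symm
  · obtain ⟨e, heR, heS⟩ := not_subset.1 hRS
    refine (mul_eq_zero_of_right _ ?_).symm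
    exact prod_eq_zero (mem_sdiff.2 ⟨hR heR, heS⟩) (if_pos heR)

theorem sum_splitWeight (f g : E → V → ℝ) (T : Finset E) (φ : V) :
    ∑ S ∈ T.powerset, splitWeight f g T S φ = ∏ e ∈ T, f e φ := by
  simpa using sum_splitWeight_filter_subset f g T (empty_subset T) φ

theorem exp_neg_mul_prod_le_sum_splitWeight {R : Finset E} (hR : R ⊆ T) {k : E → ℝ} {κ : ℝ}
    (hκ : ∑ e ∈ R, k e ≤ κ) (hf : ∀ e ∈ T, ∀ φ, 0 ≤ f e φ)
    (hfg : ∀ e ∈ R, ∀ φ, Real.exp (-k e) * f e φ ≤ g e φ) (φ : V) :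
    Real.exp (-κ) * ∏ e ∈ T, f e φ ≤ ∑ S ∈ T.powerset with R ⊆ S, splitWeight f g T S φ := by
  rw [sum_splitWeight_filter_subset f g T hR]
  calc Real.exp (-κ) * ∏ e ∈ T, f e φ
      ≤ Real.exp (-∑ e ∈ R, k e) * ∏ e ∈ T, f e φ := by
        gcongr
        exact prod_nonneg fun e he => hf e he φ
    _ = ∏ e ∈ T, (if e ∈ R then Real.exp (-k e) else 1) * f e φ := by
        rw [prod_mul_distrib, prod_ite_mem, inter_eq_right.2 hR, ← sum_neg_distrib, Real.exp_sum]
    _ ≤ ∏ e ∈ T, if e ∈ R then g e φ else f e φ := by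
        refine prod_le_prod (fun e he => mul_nonneg (by positivity) (hf e he φ)) fun e _ => ?_
        split_ifs with heR
        exacts [hfg e heR φ, (one_mul _).le]

variable [AddCommGroup V]

/-- Translations `s x` that move the Gibbs weight `∏ e ∈ T, f e` only through the edges of `R x`,
together with local weights `g e ≤ f e` that are log-concave up to `d e` along the translations;
`exp (-k e)` measures the loss in replacing `f e` by `g e`. -/
structure SmoothShifts (f g : E → V → ℝ) (T : Finset E) (X : Finset ι) (s : ι → V)
    (R : ι → Finset E) (k d : E → ℝ) : Prop where
  subset : ∀ x ∈ X, R x ⊆ T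
  nonneg : ∀ e ∈ T, ∀ φ, 0 ≤ g e φ
  le : ∀ e ∈ T, ∀ φ, g e φ ≤ f e φ
  exp_neg_mul_le : ∀ x ∈ X, ∀ e ∈ R x, ∀ φ, Real.exp (-k e) * f e φ ≤ g e φ
  weight_sub : ∀ x ∈ X, ∀ e ∈ T, e ∉ R x → ∀ φ, f e (φ - s x) = f e φ
  smooth_sub : ∀ x ∈ X, ∀ e ∈ T, e ∉ R x → ∀ φ, g e (φ - s x) = g e φ
  defect_nonneg : ∀ e ∈ T, 0 ≤ d e
  mul_le : ∀ x ∈ X, ∀ y ∈ X, ∀ e ∈ R x ∩ R y, ∀ φ,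
    g e (φ - s x) * g e (φ - s y) ≤ Real.exp (d e) * (g e φ * g e (φ - s x - s y))

namespace SmoothShifts

variable {X : Finset ι} {s : ι → V} {R : ι → Finset E} {k d : E → ℝ}

theorem splitWeight_mul_le (H : SmoothShifts f g T X s R k d) {S : Finset E} {x y : ι}
    (hx : x ∈ X) (hy : y ∈ X) (hxS : R x ⊆ S) (φ : V) :
    splitWeight f g T S (φ - s x) * splitWeight f g T S (φ - s y) ≤
      Real.exp (∑ e ∈ R x ∩ R y, d e) *
        (splitWeight f g T S φ * splitWeight f g T S (φ - s x - s y)) := by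
  have hlocal : ∀ e ∈ T, ∀ φ, 0 ≤ if e ∈ S then g e φ else f e φ - g e φ := fun e he φ => by
    split_ifs
    exacts [H.nonneg e he φ, sub_nonneg.2 (H.le e he φ)]
  have hexp : Real.exp (∑ e ∈ R x ∩ R y, d e) =
      ∏ e ∈ T, if e ∈ R x ∩ R y then Real.exp (d e) else 1 := by
    rw [prod_ite_mem, inter_eq_right.2 (inter_subset_left.trans (H.subset x hx)), Real.exp_sum]
  simp only [splitWeight, hexp, ← prod_mul_distrib]
  refine prod_le_prod (fun e he => mul_nonneg (hlocal e he _) (hlocal e he _)) fun e he => ?_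
  by_cases hxe : e ∈ R x
  · by_cases hye : e ∈ R y
    · simpa only [hxS hxe, mem_inter, hxe, hye, and_self, if_true] using
        H.mul_le x hx y hy e (mem_inter.2 ⟨hxe, hye⟩) φ
    · simp only [H.weight_sub y hy e he hye, H.smooth_sub y hy e he hye, mem_inter, hye, and_false,
        if_false, one_mul]
      exact (mul_comm _ _).le
  · rw [sub_right_comm]
    simp only [H.weight_sub x hx e he hxe, H.smooth_sub x hx e he hxe, mem_inter, hxe, false_and,
      if_false, one_mul, le_refl]

theorem exp_sum_sub_one_nonneg (H : SmoothShifts f g T X s R k d) {x : ι} (hx : x ∈ X) (y : ι) :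
    0 ≤ Real.exp (∑ e ∈ R x ∩ R y, d e) - 1 :=
  sub_nonneg.2 <| Real.one_le_exp <| sum_nonneg fun e he =>
    H.defect_nonneg e (H.subset x hx (mem_inter.1 he).1)

variable {h : V →+ ℝ}

theorem summable_one_add_sq_mul_splitWeight (H : SmoothShifts f g T X s R k d)
    (hs : Summable fun φ => (1 + h φ ^ 2) * ∏ e ∈ T, f e φ) {S : Finset E} (hS : S ⊆ T) :
    Summable fun φ => (1 + h φ ^ 2) * splitWeight f g T S φ := by
  have hnonneg := splitWeight_nonneg H.nonneg H.le
  refine .of_nonneg_of_le (fun φ => mul_nonneg (by positivity) (hnonneg S φ)) (fun φ => ?_) hs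
  rw [← sum_splitWeight f g]
  gcongr
  exact single_le_sum (f := fun S => splitWeight f g T S φ) (fun S _ => hnonneg S φ)
    (mem_powerset.2 hS)

theorem two_mul_card_mul_tsum_splitWeight_sub_le (H : SmoothShifts f g T X s R k d)
    (hs : Summable fun φ => (1 + h φ ^ 2) * ∏ e ∈ T, f e φ) (hh : ∀ x ∈ X, h (s x) = 1)
    {S : Finset E} (hS : S ⊆ T) (θ : ℝ) :
    2 * θ * (#{x ∈ X | R x ⊆ S} * ∑' φ, splitWeight f g T S φ) -
        θ ^ 2 * ((∑ x ∈ X, ∑ y ∈ X, (Real.exp (∑ e ∈ R x ∩ R y, d e) - 1)) *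
          ∑' φ, splitWeight f g T S φ) ≤
      ∑' φ, h φ ^ 2 * splitWeight f g T S φ := by
  have hnonneg := splitWeight_nonneg H.nonneg H.le S
  refine le_trans ?_ (two_mul_card_mul_tsum_sub_le_tsum_sq_mul hnonneg
    (H.summable_one_add_sq_mul_splitWeight hs hS)
    (fun x hx => hh x (mem_filter.1 hx).1) (fun x hx y hy φ => H.splitWeight_mul_le
      (mem_filter.1 hx).1 (mem_filter.1 hy).1 (mem_filter.1 hx).2 φ) θ)
  have hpos : 0 ≤ ∑' φ, splitWeight f g T S φ := tsum_nonneg hnonneg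
  gcongr 2 * θ * _ - θ ^ 2 * (?_ * _)
  refine (sum_le_sum fun x hx => ?_).trans (sum_le_sum_of_subset_of_nonneg (filter_subset _ _)
    fun x hx _ => sum_nonneg fun y _ => H.exp_sum_sub_one_nonneg hx y)
  exact sum_le_sum_of_subset_of_nonneg (filter_subset _ _)
    fun y _ _ => H.exp_sum_sub_one_nonneg (mem_filter.1 hx).1 y

theorem sum_tsum_splitWeight (H : SmoothShifts f g T X s R k d)
    (hs : Summable fun φ => (1 + h φ ^ 2) * ∏ e ∈ T, f e φ) :
    ∑ S ∈ T.powerset, ∑' φ, splitWeight f g T S φ = ∑' φ, ∏ e ∈ T, f e φ := by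
  rw [← Summable.tsum_finsetSum fun S hS => (summable_mul_of_summable_one_add_sq_mul
    (splitWeight_nonneg H.nonneg H.le S)
    (H.summable_one_add_sq_mul_splitWeight hs (mem_powerset.1 hS))).1]
  simp_rw [sum_splitWeight]

theorem sum_tsum_sq_mul_splitWeight (H : SmoothShifts f g T X s R k d)
    (hs : Summable fun φ => (1 + h φ ^ 2) * ∏ e ∈ T, f e φ) :
    ∑ S ∈ T.powerset, ∑' φ, h φ ^ 2 * splitWeight f g T S φ =
      ∑' φ, h φ ^ 2 * ∏ e ∈ T, f e φ := by
  rw [← Summable.tsum_finsetSum fun S hS => (summable_mul_of_summable_one_add_sq_mul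
    (splitWeight_nonneg H.nonneg H.le S)
    (H.summable_one_add_sq_mul_splitWeight hs (mem_powerset.1 hS))).2.2]
  simp_rw [← mul_sum, sum_splitWeight]

theorem card_mul_exp_neg_mul_tsum_le (H : SmoothShifts f g T X s R k d)
    (hs : Summable fun φ => (1 + h φ ^ 2) * ∏ e ∈ T, f e φ) {κ : ℝ}
    (hκ : ∀ x ∈ X, ∑ e ∈ R x, k e ≤ κ) :
    #X * Real.exp (-κ) * ∑' φ, ∏ e ∈ T, f e φ ≤
      ∑ S ∈ T.powerset, #{x ∈ X | R x ⊆ S} * ∑' φ, splitWeight f g T S φ := by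
  have hf : ∀ e ∈ T, ∀ φ, 0 ≤ f e φ := fun e he φ => (H.nonneg e he φ).trans (H.le e he φ)
  have hsplit : ∀ S ∈ T.powerset, Summable (splitWeight f g T S) := fun S hS =>
    (summable_mul_of_summable_one_add_sq_mul (splitWeight_nonneg H.nonneg H.le S)
      (H.summable_one_add_sq_mul_splitWeight hs (mem_powerset.1 hS))).1
  have hfsum : Summable fun φ => ∏ e ∈ T, f e φ :=
    (summable_mul_of_summable_one_add_sq_mul (fun φ => prod_nonneg fun e he => hf e he φ) hs).1
  calc #X * Real.exp (-κ) * ∑' φ, ∏ e ∈ T, f e φ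
      = ∑ _x ∈ X, ∑' φ, Real.exp (-κ) * ∏ e ∈ T, f e φ := by
        rw [sum_const, nsmul_eq_mul, tsum_mul_left, mul_assoc]
    _ ≤ ∑ x ∈ X, ∑ S ∈ T.powerset with R x ⊆ S, ∑' φ, splitWeight f g T S φ := by
        refine sum_le_sum fun x hx => ?_
        rw [← Summable.tsum_finsetSum fun S hS => hsplit S (mem_filter.1 hS).1]
        exact (hfsum.mul_left _).tsum_le_tsum (fun φ => exp_neg_mul_prod_le_sum_splitWeight
          (H.subset x hx) (hκ x hx) hf (H.exp_neg_mul_le x hx) φ)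
          (summable_sum fun S hS => hsplit S (mem_filter.1 hS).1)
    _ = ∑ S ∈ T.powerset, #{x ∈ X | R x ⊆ S} * ∑' φ, splitWeight f g T S φ := by
        simp_rw [sum_filter]
        rw [sum_comm]
        simp_rw [← sum_filter, sum_const, nsmul_eq_mul]

theorem sq_card_mul_exp_neg_mul_tsum_le (H : SmoothShifts f g T X s R k d)
    (hs : Summable fun φ => (1 + h φ ^ 2) * ∏ e ∈ T, f e φ) (hh : ∀ x ∈ X, h (s x) = 1) {κ : ℝ}
    (hκ : ∀ x ∈ X, ∑ e ∈ R x, k e ≤ κ) :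
    (#X * Real.exp (-κ)) ^ 2 * ∑' φ, ∏ e ∈ T, f e φ ≤
      (∑ x ∈ X, ∑ y ∈ X, (Real.exp (∑ e ∈ R x ∩ R y, d e) - 1)) *
        ∑' φ, h φ ^ 2 * ∏ e ∈ T, f e φ := by
  set Z := ∑' φ, ∏ e ∈ T, f e φ
  set M := ∑' φ, h φ ^ 2 * ∏ e ∈ T, f e φ
  set K := ∑ x ∈ X, ∑ y ∈ X, (Real.exp (∑ e ∈ R x ∩ R y, d e) - 1)
  have hf : ∀ φ, 0 ≤ ∏ e ∈ T, f e φ := fun φ =>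
    prod_nonneg fun e he => (H.nonneg e he φ).trans (H.le e he φ)
  have hZ : 0 ≤ Z := tsum_nonneg hf
  have hM : 0 ≤ M := tsum_nonneg fun φ => mul_nonneg (sq_nonneg _) (hf φ)
  have hK : 0 ≤ K := sum_nonneg fun x hx => sum_nonneg fun y _ => H.exp_sum_sub_one_nonneg hx y
  have hquad : ∀ θ, 0 ≤ K * Z * (θ * θ) + -(2 * (#X * Real.exp (-κ) * Z)) * θ + M := by
    intro θ
    rcases le_total θ 0 with hθ | hθ
    · have : 0 ≤ (#X * Real.exp (-κ) * Z) * -θ := mul_nonneg (by positivity) (neg_nonneg.2 hθ)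
      linarith [mul_nonneg (mul_nonneg hK hZ) (mul_self_nonneg θ)]
    · have hsum := sum_le_sum fun S hS =>
        H.two_mul_card_mul_tsum_splitWeight_sub_le hs hh (mem_powerset.1 hS) θ
      rw [sum_sub_distrib, ← mul_sum, ← mul_sum, ← mul_sum, H.sum_tsum_splitWeight hs,
        H.sum_tsum_sq_mul_splitWeight hs] at hsum
      linarith [mul_le_mul_of_nonneg_left (H.card_mul_exp_neg_mul_tsum_le hs hκ) hθ]
  rcases hZ.eq_or_lt with hZ | hZ
  · simpa only [← hZ, mul_zero] using mul_nonneg hK hM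
  · have hdiscrim := discrim_le_zero hquad
    rw [discrim] at hdiscrim
    refine le_of_mul_le_mul_right ?_ hZ
    linarith

theorem card_mul_sq_exp_neg_mul_tsum_le (H : SmoothShifts f g T X s R k d)
    (hs : Summable fun φ => (1 + h φ ^ 2) * ∏ e ∈ T, f e φ) (hh : ∀ x ∈ X, h (s x) = 1)
    (hX : X.Nonempty) {κ M S : ℝ} (hκ : ∀ x ∈ X, ∑ e ∈ R x, k e ≤ κ)
    (hM : ∀ x ∈ X, ∑ e ∈ R x, d e ≤ M)
    (hS : ∑ x ∈ X, ∑ y ∈ X, ∑ e ∈ R x ∩ R y, d e ≤ #X * S) :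
    #X * Real.exp (-κ) ^ 2 * ∑' φ, ∏ e ∈ T, f e φ ≤
      Real.exp M * S * ∑' φ, h φ ^ 2 * ∏ e ∈ T, f e φ := by
  have hexp : ∀ x ∈ X, ∀ y ∈ X, Real.exp (∑ e ∈ R x ∩ R y, d e) - 1 ≤
      Real.exp M * ∑ e ∈ R x ∩ R y, d e := by
    intro x hx y _
    have hd : ∀ e ∈ R x, 0 ≤ d e := fun e he => H.defect_nonneg e (H.subset x hx he)
    set D := ∑ e ∈ R x ∩ R y, d e
    have hD : 0 ≤ D := sum_nonneg fun e he => hd e (mem_inter.1 he).1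
    have hDM : D ≤ M :=
      (sum_le_sum_of_subset_of_nonneg inter_subset_left fun e he _ => hd e he).trans (hM x hx)
    calc Real.exp D - 1 = Real.exp D * (1 - Real.exp (-D)) := by
          rw [mul_sub, mul_one, ← Real.exp_add, add_neg_cancel, Real.exp_zero]
      _ ≤ Real.exp D * D := by gcongr; linarith [Real.add_one_le_exp (-D)]
      _ ≤ Real.exp M * D := by gcongr
  have hsum : ∑ x ∈ X, ∑ y ∈ X, (Real.exp (∑ e ∈ R x ∩ R y, d e) - 1) ≤
      Real.exp M * (#X * S) := by
    refine (sum_le_sum fun x hx => sum_le_sum (hexp x hx)).trans ?_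
    simp_rw [← mul_sum]
    gcongr
  have hf : 0 ≤ ∑' φ, h φ ^ 2 * ∏ e ∈ T, f e φ := tsum_nonneg fun φ =>
    mul_nonneg (sq_nonneg _) (prod_nonneg fun e he => (H.nonneg e he φ).trans (H.le e he φ))
  refine le_of_mul_le_mul_left ?_ (Nat.cast_pos.2 hX.card_pos : (0 : ℝ) < #X)
  linarith [H.sq_card_mul_exp_neg_mul_tsum_le hs hh hκ, mul_le_mul_of_nonneg_right hsum hf]

end SmoothShifts

end SplitWeight

section PowerEstimates

theorem rpow_add_le_rpow_add_mul_rpow_sub_one {p u v : ℝ} (hp₀ : 0 ≤ p) (hp₁ : p ≤ 1)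
    (hu : 0 < u) (huv : 0 ≤ u + v) : (u + v) ^ p ≤ u ^ p + p * u ^ (p - 1) * v := by
  have hv : -1 ≤ v / u := by rw [le_div_iff₀ hu]; linarith
  calc (u + v) ^ p = u ^ p * (1 + v / u) ^ p := by
        rw [← Real.mul_rpow hu.le (by linarith)]
        congr 1
        field_simp
    _ ≤ u ^ p * (1 + p * (v / u)) := by
        gcongr
        exact rpow_one_add_le_one_add_mul_self hv hp₀ hp₁
    _ = u ^ p + p * u ^ (p - 1) * v := by
        rw [Real.rpow_sub_one hu.ne']
        ring

theorem sum_Icc_rpow_sub_one_le {v : ℝ} (hv₀ : 0 < v) (hv₁ : v ≤ 1) (n : ℕ) :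
    ∑ r ∈ Icc 1 n, (r : ℝ) ^ (v - 1) ≤ (n : ℝ) ^ v / v := by
  rw [le_div_iff₀ hv₀]
  induction n with
  | zero => simp [hv₀.ne']
  | succ n ih =>
    have htangent := rpow_add_le_rpow_add_mul_rpow_sub_one hv₀.le hv₁
      (u := ((n + 1 : ℕ) : ℝ)) (v := -1) (by positivity) (by push_cast; simp)
    rw [show ((n + 1 : ℕ) : ℝ) + -1 = n by push_cast; ring] at htangent
    rw [sum_Icc_succ_top (by lia), add_mul]
    linarith

theorem sum_Icc_rpow_neg_le_tsum {t : ℝ} (ht : 1 < t) (n : ℕ) :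
    ∑ r ∈ Icc 1 n, (r : ℝ) ^ (-t) ≤ ∑' r : ℕ, (r : ℝ) ^ (-t) :=
  (Real.summable_nat_rpow.2 (neg_lt_neg ht)).sum_le_tsum _ fun _ _ => by positivity

theorem tsum_add_rpow_neg_le {t : ℝ} (ht : 1 < t) {N : ℕ} (hN : 0 < N) :
    ∑' n : ℕ, ((n + N + 1 : ℕ) : ℝ) ^ (-t) ≤ (N : ℝ) ^ (1 - t) / (t - 1) := by
  have hN : (0 : ℝ) < N := mod_cast hN
  calc ∑' n : ℕ, ((n + N + 1 : ℕ) : ℝ) ^ (-t) ≤ ∫ x in Set.Ioi (N : ℝ), x ^ (-t) :=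
        AntitoneOn.tsum_comp_add_le_integral (f := fun x => x ^ (-t)) N
          (fun x hx y _ hxy => Real.rpow_le_rpow_of_nonpos (hN.trans_le hx) hxy (by linarith))
          (integrableOn_Ioi_rpow_of_lt (neg_lt_neg ht) hN)
          (fun x hx => Real.rpow_nonneg (hN.le.trans (Set.mem_Ioi.1 hx).le) _)
    _ = (N : ℝ) ^ (1 - t) / (t - 1) := by
        rw [integral_Ioi_rpow_of_lt (neg_lt_neg ht) hN, neg_div, ← div_neg]
        ring_nf

theorem summable_ite {ι : Type*} {f : ι → ℝ} (hf : Summable f) (p : ι → Prop) [DecidablePred p] :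
    Summable fun i => if p i then f i else 0 :=
  (hf.indicator {i | p i}).congr fun i => by simp [Set.indicator_apply]

theorem tsum_ite_lt_natCast_rpow_neg_le {t : ℝ} (ht : 1 < t) {N : ℕ} (hN : 0 < N) :
    ∑' n : ℕ, (if N < n then (n : ℝ) ^ (-t) else 0) ≤ (N : ℝ) ^ (1 - t) / (t - 1) := by
  have hsum : Summable fun n : ℕ => if N < n then (n : ℝ) ^ (-t) else 0 :=
    summable_ite (Real.summable_nat_rpow.2 (neg_lt_neg ht)) (N < ·)
  rw [← hsum.sum_add_tsum_nat_add (N + 1), sum_eq_zero, zero_add]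
  · refine (tsum_congr fun n => ?_).trans_le (tsum_add_rpow_neg_le ht hN)
    rw [if_pos (by lia), add_assoc]
  · exact fun n hn => if_neg (by simpa [Nat.lt_succ_iff] using hn)

theorem tsum_ite_lt_abs_rpow_neg_le {t : ℝ} (ht : 1 < t) {N : ℕ} (hN : 0 < N) :
    ∑' j : ℤ, (if (N : ℤ) < |j| then |(j : ℝ)| ^ (-t) else 0) ≤
      2 * ((N : ℝ) ^ (1 - t) / (t - 1)) := by
  have hsum : Summable fun n : ℕ => if N < n then (n : ℝ) ^ (-t) else 0 :=
    summable_ite (Real.summable_nat_rpow.2 (neg_lt_neg ht)) (N < ·)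
  have hint := HasSum.of_nat_of_neg
    (f := fun j : ℤ => if (N : ℤ) < |j| then |(j : ℝ)| ^ (-t) else 0)
    (by simpa using hsum.hasSum) (by simpa using hsum.hasSum)
  rw [hint.tsum_eq, abs_zero, if_neg (by lia), sub_zero, ← two_mul]
  gcongr
  exact tsum_ite_lt_natCast_rpow_neg_le ht hN

end PowerEstimates

section SmoothAbsRpow

/-- A smooth majorant of `|a| ^ q`, with curvature of order `A ^ (q / 2 - 1)`. -/
noncomputable def smoothAbsRpow (q A a : ℝ) : ℝ := (a ^ 2 + A) ^ (q / 2)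

theorem sq_rpow_half (a q : ℝ) : (a ^ 2) ^ (q / 2) = |a| ^ q := by
  rw [← sq_abs, ← Real.rpow_natCast_mul (abs_nonneg a)]
  congr 1
  push_cast
  ring

variable {q A : ℝ}

theorem abs_rpow_le_smoothAbsRpow (hq : 0 ≤ q) (hA : 0 ≤ A) (a : ℝ) :
    |a| ^ q ≤ smoothAbsRpow q A a := by
  rw [← sq_rpow_half, smoothAbsRpow]
  gcongr
  linarith

theorem smoothAbsRpow_le (hq₀ : 0 ≤ q) (hq₂ : q ≤ 2) (hA : 0 ≤ A) (a : ℝ) :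
    smoothAbsRpow q A a ≤ |a| ^ q + A ^ (q / 2) := by
  rw [← sq_rpow_half]
  exact Real.rpow_add_le_add_rpow (sq_nonneg a) hA (by linarith) (by linarith)

theorem smoothAbsRpow_add_add_smoothAbsRpow_sub_le (hq₀ : 0 ≤ q) (hq₂ : q ≤ 2) (hA : 0 < A)
    (a : ℝ) {b : ℝ} (hb : b ^ 2 ≤ 1) :
    smoothAbsRpow q A (a + b) + smoothAbsRpow q A (a - b) ≤
      2 * smoothAbsRpow q A a + q * A ^ (q / 2 - 1) := by
  have hadd : (a + b) ^ 2 + A ∈ Set.Ici 0 := Set.mem_Ici.2 (by positivity)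
  have hsub : (a - b) ^ 2 + A ∈ Set.Ici 0 := Set.mem_Ici.2 (by positivity)
  have hconcave := (Real.concaveOn_rpow (by linarith : 0 ≤ q / 2) (by linarith)).2 hadd hsub
    one_half_pos.le one_half_pos.le (add_halves 1)
  have hmid : (1 / 2 : ℝ) • ((a + b) ^ 2 + A) + (1 / 2 : ℝ) • ((a - b) ^ 2 + A) =
      a ^ 2 + A + b ^ 2 := by
    simp only [smul_eq_mul]
    ring
  rw [hmid, smul_eq_mul, smul_eq_mul] at hconcave
  have htangent := rpow_add_le_rpow_add_mul_rpow_sub_one (p := q / 2) (u := a ^ 2 + A)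
    (v := b ^ 2) (by linarith) (by linarith) (by positivity) (by positivity)
  have hpow : (a ^ 2 + A) ^ (q / 2 - 1) ≤ A ^ (q / 2 - 1) :=
    Real.rpow_le_rpow_of_nonpos hA (by linarith [sq_nonneg a]) (by linarith)
  have hslope : q / 2 * (a ^ 2 + A) ^ (q / 2 - 1) * b ^ 2 ≤ q / 2 * A ^ (q / 2 - 1) * 1 :=
    mul_le_mul (by gcongr) hb (sq_nonneg b) (by positivity)
  simp only [smoothAbsRpow]
  linarith

end SmoothAbsRpow

namespace ChainConfig

/-- The configurations of length `N`, as a group of height functions. -/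
def addSubgroup (N : ℕ) : AddSubgroup (ℤ → ℤ) where
  carrier := {φ | ∀ k : ℤ, (N : ℤ) < |k| → φ k = 0}
  add_mem' hφ hψ k hk := by simp [hφ k hk, hψ k hk]
  zero_mem' _ _ := rfl
  neg_mem' hφ k hk := by simp [hφ k hk]

instance (N : ℕ) : AddCommGroup (ChainConfig N) := inferInstanceAs (AddCommGroup (addSubgroup N))

/-- The height at `k`, as an additive map. -/
def height (N : ℕ) (k : ℤ) : ChainConfig N →+ ℤ :=
  (Pi.evalAddMonoidHom (fun _ : ℤ => ℤ) k).comp (addSubgroup N).subtype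

variable {N : ℕ}

theorem height_apply (k : ℤ) (φ : ChainConfig N) : height N k φ = φ.val k := rfl

theorem val_neg (φ : ChainConfig N) : (-φ).val = -φ.val := rfl

/-- The indicator of `{-x, …, x}`, for `x ≤ N`; it is truncated at `N` to be a configuration for
every `x`. -/
def plateau (N x : ℕ) : ChainConfig N :=
  ⟨fun k => if k.natAbs ≤ min x N then 1 else 0, fun k hk => if_neg (by
    rw [Int.abs_eq_natAbs] at hk
    lia)⟩

theorem height_plateau (x : ℕ) (k : ℤ) :
    height N k (plateau N x) = if k.natAbs ≤ min x N then 1 else 0 := rfl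

theorem height_zero_plateau (x : ℕ) : height N 0 (plateau N x) = 1 := by
  rw [height_plateau, if_pos]
  simp

end ChainConfig

/-- The sites `{-N, …, N}`. -/
noncomputable def chainBox (N : ℕ) : Finset ℤ := Icc (-N : ℤ) N

theorem mem_chainBox {N : ℕ} {i : ℤ} : i ∈ chainBox N ↔ |i| ≤ N := by
  rw [chainBox, mem_Icc, abs_le]

/-- Edges carrying the energy of a configuration: the ordered pairs `inl (i, j)` of sites, and an
edge `inr i` from the site `i` to the exterior, where the height vanishes. -/
abbrev ChainEdge : Type := (ℤ × ℤ) ⊕ ℤ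

/-- The edges with endpoints in `{-N, …, N}`, including the exterior edges. -/
noncomputable def chainEdges (N : ℕ) : Finset ChainEdge :=
  (chainBox N ×ˢ chainBox N).disjSum (chainBox N)

/-- The total coupling of the site `i` to the sites outside `{-N, …, N}`. -/
noncomputable def exteriorCoupling (N : ℕ) (α : ℝ) (i : ℤ) : ℝ :=
  ∑' j : ℤ, if (N : ℤ) < |j| then |((i - j : ℤ) : ℝ)| ^ (-α) else 0

/-- The coupling along an edge; ordered pairs with the exterior occur twice in the energy, hence
the factor `2`. -/
noncomputable def conductance (N : ℕ) (α : ℝ) : ChainEdge → ℝ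
  | .inl p => |((p.1 - p.2 : ℤ) : ℝ)| ^ (-α)
  | .inr i => 2 * exteriorCoupling N α i

/-- The length of an edge; exterior edges count as having length `N`. -/
def edgeLength (N : ℕ) : ChainEdge → ℕ
  | .inl p => (p.1 - p.2).natAbs
  | .inr _ => N

/-- The height difference along an edge. -/
def edgeGradient (N : ℕ) : ChainEdge → ChainConfig N →+ ℤ
  | .inl p => ChainConfig.height N p.1 - ChainConfig.height N p.2
  | .inr i => ChainConfig.height N i

/-- The edges at which the plateau of half-width `x` jumps. -/
noncomputable def crossingEdges (N x : ℕ) : Finset ChainEdge :=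
  {e ∈ chainEdges N | edgeGradient N e (ChainConfig.plateau N x) ≠ 0}

/-- The Boltzmann factor of an edge. -/
noncomputable def edgeWeight (N : ℕ) (β α q : ℝ) (e : ChainEdge) (φ : ChainConfig N) : ℝ :=
  Real.exp (-(β * conductance N α e * |(edgeGradient N e φ : ℝ)| ^ q))

/-- The Boltzmann factor of an edge `e` after smoothing its potential at the scale `A e`. -/
noncomputable def smoothEdgeWeight (N : ℕ) (β α q : ℝ) (A : ChainEdge → ℝ) (e : ChainEdge)
    (φ : ChainConfig N) : ℝ :=
  Real.exp (-(β * conductance N α e * smoothAbsRpow q (A e) (edgeGradient N e φ)))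

section ExteriorCoupling

variable {N : ℕ} {α : ℝ}

theorem summable_exteriorCoupling (hα : 1 < α) (N : ℕ) (i : ℤ) :
    Summable fun j : ℤ => if (N : ℤ) < |j| then |((i - j : ℤ) : ℝ)| ^ (-α) else 0 :=
  summable_ite ((Equiv.subLeft i).summable_iff.2 (Real.summable_abs_int_rpow hα))
    fun j => (N : ℤ) < |j|

theorem exteriorCoupling_nonneg (N : ℕ) (α : ℝ) (i : ℤ) : 0 ≤ exteriorCoupling N α i :=
  tsum_nonneg fun j => by split_ifs <;> positivity

theorem exteriorCoupling_pos (hα : 1 < α) {i : ℤ} (hi : i ∈ chainBox N) :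
    0 < exteriorCoupling N α i := by
  have hi := abs_le.1 (mem_chainBox.1 hi)
  refine (summable_exteriorCoupling hα N i).tsum_pos (fun j => by split_ifs <;> positivity)
    (N + 1 : ℤ) ?_
  rw [if_pos ((lt_add_one _).trans_le (le_abs_self _))]
  have : i - (N + 1) ≠ 0 := by lia
  positivity

theorem exteriorCoupling_le (hα : 1 < α) (hN : 0 < N) {i : ℤ} (hi : 2 * |i| ≤ N) :
    exteriorCoupling N α i ≤ 2 * 2 ^ α / (α - 1) * (N : ℝ) ^ (1 - α) := by
  have hterm : ∀ j : ℤ, (if (N : ℤ) < |j| then |((i - j : ℤ) : ℝ)| ^ (-α) else 0) ≤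
      2 ^ α * if (N : ℤ) < |j| then |(j : ℝ)| ^ (-α) else 0 := by
    intro j
    split_ifs with hj
    · have hj₀ : 0 < |(j : ℝ)| := by exact_mod_cast (Nat.cast_nonneg N).trans_lt hj
      have hij : |(j : ℝ)| / 2 ≤ |((i - j : ℤ) : ℝ)| := by
        have : |j| ≤ 2 * |i - j| := by linarith [abs_sub_abs_le_abs_sub j i, abs_sub_comm i j]
        rw [div_le_iff₀' two_pos]
        exact_mod_cast this
      calc |((i - j : ℤ) : ℝ)| ^ (-α) ≤ (|(j : ℝ)| / 2) ^ (-α) :=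
            Real.rpow_le_rpow_of_nonpos (by positivity) hij (by linarith)
        _ = 2 ^ α * |(j : ℝ)| ^ (-α) := by
            rw [Real.div_rpow hj₀.le zero_le_two, Real.rpow_neg zero_le_two, div_inv_eq_mul,
              mul_comm]
    · rw [mul_zero]
  calc exteriorCoupling N α i
      ≤ ∑' j : ℤ, 2 ^ α * if (N : ℤ) < |j| then |(j : ℝ)| ^ (-α) else 0 :=
        (summable_exteriorCoupling hα N i).tsum_le_tsum hterm
          ((summable_ite (Real.summable_abs_int_rpow hα) _).mul_left _)
    _ ≤ 2 ^ α * (2 * ((N : ℝ) ^ (1 - α) / (α - 1))) := by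
        rw [tsum_mul_left]
        gcongr
        exact tsum_ite_lt_abs_rpow_neg_le hα hN
    _ = 2 * 2 ^ α / (α - 1) * (N : ℝ) ^ (1 - α) := by ring

theorem conductance_nonneg (N : ℕ) (α : ℝ) : ∀ e, 0 ≤ conductance N α e
  | .inl _ => Real.rpow_nonneg (abs_nonneg _) _
  | .inr i => mul_nonneg zero_le_two (exteriorCoupling_nonneg N α i)

end ExteriorCoupling

section Energy

theorem hasSum_prod_of_hasSum_section {ι κ : Type*} {s : Finset ι} {f : ι × κ → ℝ} {a : ι → ℝ}
    (hf : ∀ i ∈ s, HasSum (fun j => f (i, j)) (a i)) (hs : ∀ p, p.1 ∉ s → f p = 0) :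
    HasSum f (∑ i ∈ s, a i) := by
  classical
  have hsection : ∀ i ∈ s, HasSum (fun p : ι × κ => if p.1 = i then f p else 0) (a i) := by
    intro i hi
    rw [← (Prod.mk_right_injective i).hasSum_iff]
    · simpa only [Function.comp_def, if_true] using hf i hi
    · rintro ⟨i', j⟩ hp
      exact if_neg fun h : i' = i => hp ⟨j, by rw [h]⟩
  convert hasSum_sum hsection using 1 with p
  ext p
  rw [sum_ite_eq]
  split_ifs with hp
  exacts [rfl, hs p hp]

variable {N : ℕ} {α q : ℝ}

theorem interaction_eq_add (hq : q ≠ 0) (φ : ChainConfig N) (i j : ℤ) :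
    |((φ.val i - φ.val j : ℤ) : ℝ)| ^ q * |((i - j : ℤ) : ℝ)| ^ (-α) =
      (if (i, j) ∈ chainBox N ×ˢ chainBox N then
        |((φ.val i - φ.val j : ℤ) : ℝ)| ^ q * |((i - j : ℤ) : ℝ)| ^ (-α) else 0) +
      (|(φ.val i : ℝ)| ^ q * (if (N : ℤ) < |j| then |((i - j : ℤ) : ℝ)| ^ (-α) else 0) +
       |(φ.val j : ℝ)| ^ q * (if (N : ℤ) < |i| then |((j - i : ℤ) : ℝ)| ^ (-α) else 0)) := by
  simp only [mem_product, mem_chainBox]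
  by_cases hi : |i| ≤ N <;> by_cases hj : |j| ≤ N
  · simp [hi, hj, not_lt.2 hi, not_lt.2 hj]
  · simp [hj, not_le.1 hj, not_lt.2 hi, φ.2 j (not_le.1 hj)]
  · simp [hi, not_le.1 hi, not_lt.2 hj, φ.2 i (not_le.1 hi), abs_sub_comm]
  · simp [hi, φ.2 i (not_le.1 hi), φ.2 j (not_le.1 hj), hq]

theorem hasSum_abs_rpow_mul_exteriorCoupling (hα : 1 < α) (hq : q ≠ 0) (φ : ChainConfig N) :
    HasSum (fun p : ℤ × ℤ => |(φ.val p.1 : ℝ)| ^ q *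
        (if (N : ℤ) < |p.2| then |((p.1 - p.2 : ℤ) : ℝ)| ^ (-α) else 0))
      (∑ i ∈ chainBox N, |(φ.val i : ℝ)| ^ q * exteriorCoupling N α i) :=
  hasSum_prod_of_hasSum_section
    (fun i _ => (summable_exteriorCoupling hα N i).hasSum.mul_left _) fun p hp => by
      rw [φ.2 p.1 (not_le.1 (mem_chainBox.not.1 hp)), Int.cast_zero, abs_zero, Real.zero_rpow hq,
        zero_mul]

theorem chainEnergy_eq_sum_chainEdges (hα : 1 < α) (hq : 0 < q) (β : ℝ) (φ : ChainConfig N) :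
    chainEnergy β α q φ.val =
      ∑ e ∈ chainEdges N, β * conductance N α e * |(edgeGradient N e φ : ℝ)| ^ q := by
  have hext := hasSum_abs_rpow_mul_exteriorCoupling hα hq.ne' φ
  have hbox := hasSum_sum_of_ne_finset_zero (L := .unconditional _) (s := chainBox N ×ˢ chainBox N)
    (f := fun p : ℤ × ℤ => if p ∈ chainBox N ×ˢ chainBox N then
        |((φ.val p.1 - φ.val p.2 : ℤ) : ℝ)| ^ q * |((p.1 - p.2 : ℤ) : ℝ)| ^ (-α) else 0)
    fun p hp => if_neg hp
  have htotal := (hbox.add (hext.add ((Equiv.prodComm ℤ ℤ).hasSum_iff.2 hext))).tsum_eq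
  rw [sum_ite_of_true fun _ h => h, ← two_mul] at htotal
  calc chainEnergy β α q φ.val
      = β * ∑' p : ℤ × ℤ, |((φ.val p.1 - φ.val p.2 : ℤ) : ℝ)| ^ q *
          |((p.1 - p.2 : ℤ) : ℝ)| ^ (-α) := by
        rw [chainEnergy]
        congr 1
        refine tsum_congr fun p => ?_
        split_ifs with hp
        · simp [hp, hq.ne']
        · rw [Real.rpow_neg (abs_nonneg _), div_eq_mul_inv]
    _ = β * (∑ p ∈ chainBox N ×ˢ chainBox N, |((φ.val p.1 - φ.val p.2 : ℤ) : ℝ)| ^ q *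
          |((p.1 - p.2 : ℤ) : ℝ)| ^ (-α) +
          2 * ∑ i ∈ chainBox N, |(φ.val i : ℝ)| ^ q * exteriorCoupling N α i) := by
        rw [← htotal]
        congr 1
        exact tsum_congr fun p => interaction_eq_add hq.ne' φ p.1 p.2
    _ = ∑ e ∈ chainEdges N, β * conductance N α e * |(edgeGradient N e φ : ℝ)| ^ q := by
        rw [chainEdges, sum_disjSum, mul_add, mul_sum, mul_sum, mul_sum]
        simp only [conductance, edgeGradient, AddMonoidHom.sub_apply, ChainConfig.height_apply]
        congr 1 <;> exact sum_congr rfl fun _ _ => by ring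

end Energy

section Summability

theorem summable_one_add_sq_mul_exp_neg_mul_abs_rpow {c q : ℝ} (hc : 0 < c) (hq : 0 < q) :
    Summable fun a : ℤ => (1 + (a : ℝ) ^ 2) * Real.exp (-(c * |(a : ℝ)| ^ q)) := by
  have hexp : (fun n : ℕ => Real.exp (-(c * (n : ℝ) ^ q))) =O[Filter.atTop]
      fun n : ℕ => ((n : ℝ) ^ q) ^ (-4 / q) := by
    simpa only [Function.comp_def, neg_mul] using
      ((isLittleO_exp_neg_mul_rpow_atTop hc (-4 / q)).comp_tendsto
        ((tendsto_rpow_atTop hq).comp tendsto_natCast_atTop_atTop)).isBigO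
  have hsq : (fun n : ℕ => 1 + (n : ℝ) ^ 2) =O[Filter.atTop] fun n : ℕ => (n : ℝ) ^ (2 : ℝ) := by
    refine .of_bound 2 ?_
    filter_upwards [Filter.eventually_ge_atTop 1] with n hn
    have hn : (1 : ℝ) ≤ n := Nat.one_le_cast.2 hn
    rw [Real.norm_of_nonneg (by positivity), Real.norm_of_nonneg (by positivity), Real.rpow_two]
    nlinarith
  have hnat : Summable fun n : ℕ => (1 + (n : ℝ) ^ 2) * Real.exp (-(c * (n : ℝ) ^ q)) := by
    refine summable_of_isBigO_nat (Real.summable_nat_rpow.2 (by norm_num : (-2 : ℝ) < -1))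
      ((hsq.mul hexp).congr' .rfl ?_)
    filter_upwards [Filter.eventually_ge_atTop 1] with n hn
    have hn : (0 : ℝ) < n := Nat.cast_pos.2 hn
    rw [← Real.rpow_mul hn.le, ← Real.rpow_add hn, mul_div_cancel₀ _ hq.ne']
    norm_num
  exact .of_nat_of_neg (by simpa using hnat) (by simpa using hnat)

theorem summable_prod_comp {κ : Type*} {h : κ → ℝ} (h₀ : ∀ a, 0 ≤ h a) (hs : Summable h)
    (ι : Type*) [Fintype ι] : Summable fun φ : ι → κ => ∏ i, h (φ i) := by
  apply Fintype.induction_empty_option (P := fun ι _ => Summable fun φ : ι → κ => ∏ i, h (φ i))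
  case of_equiv =>
    intro ι ι' _ e ih
    let := Fintype.ofEquiv ι' e.symm
    exact ((e.arrowCongr (.refl κ)).symm.summable_iff.2 ih).congr fun φ =>
      e.prod_comp fun i => h (φ i)
  case h_empty => exact .of_finite
  case h_option =>
    intro ι _ ih
    have hmul := hs.mul_of_nonneg ih h₀ fun φ => prod_nonneg fun i _ => h₀ (φ i)
    exact (((Equiv.piOptionEquivProd (β := fun _ => κ)).summable_iff).2 hmul).congr fun φ =>
      (Fintype.prod_option fun i => h (φ i)).symm

end Summability

section Weight

variable {N : ℕ} {β α q : ℝ}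

theorem chainWeight_eq_prod_chainEdges (hα : 1 < α) (hq : 0 < q) (β : ℝ) (φ : ChainConfig N) :
    chainWeight β α q φ.val =
      ∏ e ∈ chainEdges N, edgeWeight N β α q e φ := by
  simp only [chainWeight, chainEnergy_eq_sum_chainEdges hα hq, edgeWeight, ← Real.exp_sum,
    sum_neg_distrib]

theorem exists_pos_mul_sum_abs_rpow_le_chainEnergy (hβ : 0 < β) (hα : 1 < α) (hq : 0 < q) (N : ℕ) :
    ∃ c > 0, ∀ φ : ChainConfig N,
      ∑ i : chainBox N, c * |(φ.val i : ℝ)| ^ q ≤ chainEnergy β α q φ.val := by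
  have hne : (chainBox N).Nonempty := ⟨0, mem_chainBox.2 (by simp)⟩
  obtain ⟨i₀, hi₀, hmin⟩ := exists_min_image (chainBox N) (exteriorCoupling N α) hne
  have hpos := exteriorCoupling_pos hα hi₀
  refine ⟨β * (2 * exteriorCoupling N α i₀), by positivity, fun φ => ?_⟩
  have hinner : 0 ≤ ∑ p ∈ chainBox N ×ˢ chainBox N,
      β * conductance N α (.inl p) * |(edgeGradient N (.inl p) φ : ℝ)| ^ q :=
    sum_nonneg fun p _ => by have := conductance_nonneg N α (.inl p); positivity
  rw [chainEnergy_eq_sum_chainEdges hα hq, chainEdges, sum_disjSum, sum_coe_sort (chainBox N)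
    fun i => β * (2 * exteriorCoupling N α i₀) * |(φ.val i : ℝ)| ^ q]
  refine le_add_of_nonneg_of_le hinner (sum_le_sum fun i hi => ?_)
  simp only [conductance, edgeGradient, ChainConfig.height_apply]
  gcongr
  exact hmin i hi

theorem ChainConfig.injective_restrict_chainBox :
    Function.Injective fun (φ : ChainConfig N) (i : chainBox N) => φ.val i := by
  intro φ ψ h
  refine Subtype.ext (funext fun k => ?_)
  by_cases hk : |k| ≤ N
  · exact congrFun h ⟨k, mem_chainBox.2 hk⟩
  · rw [φ.2 k (not_le.1 hk), ψ.2 k (not_le.1 hk)]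

theorem summable_one_add_sq_mul_chainWeight (hβ : 0 < β) (hα : 1 < α) (hq : 0 < q) (N : ℕ) :
    Summable fun φ : ChainConfig N => (1 + (φ.val 0 : ℝ) ^ 2) * chainWeight β α q φ.val := by
  obtain ⟨c, hc, hle⟩ := exists_pos_mul_sum_abs_rpow_le_chainEnergy hβ hα hq N
  have hprod := (summable_prod_comp (fun a : ℤ => by positivity)
    (summable_one_add_sq_mul_exp_neg_mul_abs_rpow hc hq) (chainBox N)).comp_injective
      (ChainConfig.injective_restrict_chainBox (N := N))
  refine hprod.of_nonneg_of_le (fun φ => mul_nonneg (by positivity) (Real.exp_nonneg _))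
    fun φ => ?_
  have hsq : 1 + (φ.val 0 : ℝ) ^ 2 ≤ ∏ i : chainBox N, (1 + (φ.val i : ℝ) ^ 2) := by
    have h₀ : (0 : ℤ) ∈ chainBox N := mem_chainBox.2 (by simp)
    rw [← mul_prod_erase univ _ (mem_univ (⟨0, h₀⟩ : chainBox N))]
    exact le_mul_of_one_le_right (by positivity)
      (one_le_prod fun i _ => le_add_of_nonneg_right (sq_nonneg _))
  have hexp : chainWeight β α q φ.val ≤
      ∏ i : chainBox N, Real.exp (-(c * |(φ.val i : ℝ)| ^ q)) := by
    rw [← Real.exp_sum, sum_neg_distrib, chainWeight]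
    exact Real.exp_le_exp.2 (neg_le_neg (hle φ))
  rw [Function.comp_apply, prod_mul_distrib]
  exact mul_le_mul hsq hexp (Real.exp_nonneg _) (prod_nonneg fun i _ => by positivity)

theorem chainWeight_neg (β α q : ℝ) (φ : ℤ → ℤ) :
    chainWeight β α q (-φ) = chainWeight β α q φ := by
  simp only [chainWeight, chainEnergy, Pi.neg_apply, neg_sub_neg, Int.cast_sub, abs_sub_comm]

theorem chainMean_eq_zero (N : ℕ) (β α q : ℝ) : chainMean N β α q = 0 := by
  have hneg := (Equiv.neg (ChainConfig N)).tsum_eq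
    fun φ => (φ.val 0 : ℝ) * chainWeight β α q φ.val
  simp only [Equiv.neg_apply, ChainConfig.val_neg, chainWeight_neg, Pi.neg_apply, Int.cast_neg,
    neg_mul, tsum_neg] at hneg
  rw [chainMean, self_eq_neg.1 hneg.symm, zero_div]

theorem chainZ_pos (hβ : 0 < β) (hα : 1 < α) (hq : 0 < q) (N : ℕ) : 0 < chainZ N β α q := by
  refine Summable.tsum_pos ?_ (fun φ => Real.exp_nonneg _) (0 : ChainConfig N) (Real.exp_pos _)
  refine (summable_one_add_sq_mul_chainWeight hβ hα hq N).of_nonneg_of_le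
    (fun φ => Real.exp_nonneg _) fun φ => ?_
  exact le_mul_of_one_le_left (Real.exp_nonneg _) (le_add_of_nonneg_right (sq_nonneg _))

theorem le_chainVar_iff (hβ : 0 < β) (hα : 1 < α) (hq : 0 < q) {a : ℝ} :
    a ≤ chainVar N β α q ↔
      a * chainZ N β α q ≤ ∑' φ : ChainConfig N, (φ.val 0 : ℝ) ^ 2 * chainWeight β α q φ.val := by
  rw [chainVar, chainMean_eq_zero, zero_pow two_ne_zero, sub_zero,
    le_div_iff₀ (chainZ_pos hβ hα hq N)]

end Weight

section Plateau

variable {N x y : ℕ}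

theorem sq_edgeGradient_plateau_le_one (e : ChainEdge) :
    edgeGradient N e (ChainConfig.plateau N x) ^ 2 ≤ 1 := by
  rcases e with p | i <;>
    simp only [edgeGradient, AddMonoidHom.sub_apply, ChainConfig.height_plateau] <;>
    split_ifs <;> decide

theorem edgeGradient_plateau_eq_of_mem_crossingEdges {e : ChainEdge} (hx : e ∈ crossingEdges N x)
    (hy : e ∈ crossingEdges N y) :
    edgeGradient N e (ChainConfig.plateau N x) = edgeGradient N e (ChainConfig.plateau N y) := by
  have hx := (mem_filter.1 hx).2
  have hy := (mem_filter.1 hy).2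
  rcases e with p | i <;>
    simp only [edgeGradient, AddMonoidHom.sub_apply, ChainConfig.height_plateau] at hx hy ⊢ <;>
    grind

theorem edgeGradient_plateau_eq_zero {e : ChainEdge} (he : e ∈ chainEdges N)
    (hx : e ∉ crossingEdges N x) : edgeGradient N e (ChainConfig.plateau N x) = 0 :=
  not_not.1 fun h => hx (mem_filter.2 ⟨he, h⟩)

theorem smoothShifts_plateau {β q : ℝ} (hβ : 0 ≤ β) (hq₀ : 0 ≤ q) (hq₂ : q ≤ 2) (α : ℝ)
    {A : ChainEdge → ℝ} (hA : ∀ e, 0 < A e) (X : Finset ℕ) :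
    SmoothShifts (edgeWeight N β α q) (smoothEdgeWeight N β α q A) (chainEdges N) X
      (ChainConfig.plateau N) (crossingEdges N)
      (fun e => β * conductance N α e * A e ^ (q / 2))
      (fun e => β * conductance N α e * (q * A e ^ (q / 2 - 1))) := by
  have hJ : ∀ e, 0 ≤ β * conductance N α e := fun e => mul_nonneg hβ (conductance_nonneg N α e)
  refine ⟨fun x _ => filter_subset _ _, fun e _ φ => Real.exp_nonneg _, fun e _ φ => ?le,
    fun x _ e _ φ => ?exp_neg_mul_le, fun x _ e he hx φ => ?weight_sub,
    fun x _ e he hx φ => ?smooth_sub, fun e _ => ?defect_nonneg, fun x _ y _ e he φ => ?mul_le⟩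
  case le =>
    refine Real.exp_le_exp.2 (neg_le_neg (mul_le_mul_of_nonneg_left ?_ (hJ e)))
    exact abs_rpow_le_smoothAbsRpow hq₀ (hA e).le _
  case exp_neg_mul_le =>
    rw [edgeWeight, smoothEdgeWeight, ← Real.exp_add, Real.exp_le_exp]
    linarith [mul_le_mul_of_nonneg_left
      (smoothAbsRpow_le hq₀ hq₂ (hA e).le (edgeGradient N e φ : ℝ)) (hJ e)]
  case weight_sub => rw [edgeWeight, map_sub, edgeGradient_plateau_eq_zero he hx, sub_zero]; rfl
  case smooth_sub =>
    rw [smoothEdgeWeight, map_sub, edgeGradient_plateau_eq_zero he hx, sub_zero]; rfl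
  case defect_nonneg =>
    have := hA e
    have := hJ e
    positivity
  case mul_le =>
    have hxy := edgeGradient_plateau_eq_of_mem_crossingEdges (mem_inter.1 he).1 (mem_inter.1 he).2
    have hsq : (edgeGradient N e (ChainConfig.plateau N x) : ℝ) ^ 2 ≤ 1 :=
      mod_cast sq_edgeGradient_plateau_le_one e
    have hconv := mul_le_mul_of_nonneg_left (smoothAbsRpow_add_add_smoothAbsRpow_sub_le hq₀ hq₂
      (hA e) (edgeGradient N e φ - edgeGradient N e (ChainConfig.plateau N x) : ℝ) hsq) (hJ e)
    rw [sub_add_cancel] at hconv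
    simp only [smoothEdgeWeight, ← Real.exp_add, Real.exp_le_exp, map_sub, Int.cast_sub, ← hxy]
    linarith

end Plateau

section CrossingEdges

variable {N x : ℕ}

theorem card_filter_crossing_natAbs_sub_eq_le (N x r : ℕ) :
    #{p ∈ chainBox N ×ˢ chainBox N | edgeGradient N (.inl p) (ChainConfig.plateau N x) ≠ 0 ∧
      (p.1 - p.2).natAbs = r} ≤ 4 * r := by
  -- `M` holds the left endpoints of the intervals of length `r` containing a jump of the plateau.
  let M : Finset ℤ := Ioc (min x N - r : ℤ) (min x N) ∪ Ico (-(min x N) - r : ℤ) (-(min x N))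
  have hM : #M ≤ 2 * r := by
    refine (card_union_le _ _).trans ?_
    rw [Int.card_Ioc, Int.card_Ico]
    lia
  have hsub : {p ∈ chainBox N ×ˢ chainBox N |
      edgeGradient N (.inl p) (ChainConfig.plateau N x) ≠ 0 ∧ (p.1 - p.2).natAbs = r} ⊆
      M.image (fun i => (i, i + (r : ℤ))) ∪ M.image (fun i => (i + (r : ℤ), i)) := by
    rintro ⟨i, j⟩ h
    obtain ⟨hcross, hr⟩ := (mem_filter.1 h).2
    simp only [edgeGradient, AddMonoidHom.sub_apply, ChainConfig.height_plateau] at hcross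
    simp only [M, mem_union, mem_image, mem_Ioc, mem_Ico, Prod.mk.injEq]
    rcases le_total i j with hij | hij
    · exact .inl ⟨i, by grind, rfl, by grind⟩
    · exact .inr ⟨j, by grind, by grind, rfl⟩
  calc _ ≤ _ := card_le_card hsub
    _ ≤ #M + #M := (card_union_le _ _).trans (add_le_add card_image_le card_image_le)
    _ ≤ 4 * r := by lia

theorem sum_crossing_natAbs_sub_le {F : ℕ → ℝ} (hF : ∀ r, 0 ≤ F r) (N x : ℕ) :
    ∑ p ∈ chainBox N ×ˢ chainBox N with edgeGradient N (.inl p) (ChainConfig.plateau N x) ≠ 0,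
      F (p.1 - p.2).natAbs ≤ 4 * ∑ r ∈ Icc 1 (2 * N), r * F r := by
  have hmaps : ∀ p ∈ chainBox N ×ˢ chainBox N,
      edgeGradient N (.inl p) (ChainConfig.plateau N x) ≠ 0 →
        (p.1 - p.2).natAbs ∈ Icc 1 (2 * N) := by
    rintro ⟨i, j⟩ hp hcross
    have hij : i ≠ j := fun h => hcross (by simp [edgeGradient, h])
    simp only [mem_product, chainBox, mem_Icc] at hp ⊢
    lia
  rw [← sum_fiberwise_of_maps_to fun p hp => hmaps p (mem_filter.1 hp).1 (mem_filter.1 hp).2,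
    mul_sum]
  refine sum_le_sum fun r _ => ?_
  rw [sum_congr rfl fun p hp => by rw [(mem_filter.1 hp).2], sum_const, nsmul_eq_mul, filter_filter,
    ← mul_assoc]
  exact mul_le_mul_of_nonneg_right (mod_cast card_filter_crossing_natAbs_sub_eq_le N x r) (hF r)

variable {α : ℝ}

theorem sum_crossing_exterior_conductance_le (hα : 1 < α) (hN : 0 < N) (hx : 2 * x ≤ N) :
    ∑ i ∈ chainBox N with edgeGradient N (.inr i) (ChainConfig.plateau N x) ≠ 0,
      conductance N α (.inr i) ≤ 8 * 2 ^ α / (α - 1) * (N : ℝ) ^ (2 - α) := by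
  have hsub : {i ∈ chainBox N | edgeGradient N (.inr i) (ChainConfig.plateau N x) ≠ 0} ⊆
      Icc (-x : ℤ) x := by
    intro i hi
    have hi := (mem_filter.1 hi).2
    simp only [edgeGradient, ChainConfig.height_plateau] at hi
    rw [mem_Icc]
    grind
  have hcard : (#(Icc (-x : ℤ) x) : ℝ) ≤ 2 * N := by
    rw [Int.card_Icc]
    exact_mod_cast (by lia : (x + 1 - -x : ℤ).toNat ≤ 2 * N)
  calc _ ≤ ∑ i ∈ Icc (-x : ℤ) x, conductance N α (.inr i) :=
        sum_le_sum_of_subset_of_nonneg hsub fun i _ _ => conductance_nonneg N α _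
    _ ≤ #(Icc (-x : ℤ) x) • (2 * (2 * 2 ^ α / (α - 1) * (N : ℝ) ^ (1 - α))) := by
        refine sum_le_card_nsmul _ _ _ fun i hi => ?_
        have hi : |i| ≤ x := abs_le.2 (mem_Icc.1 hi)
        exact mul_le_mul_of_nonneg_left (exteriorCoupling_le hα hN (by lia)) zero_le_two
    _ ≤ 2 * N * (2 * (2 * 2 ^ α / (α - 1) * (N : ℝ) ^ (1 - α))) := by
        rw [nsmul_eq_mul]
        gcongr
    _ = 8 * 2 ^ α / (α - 1) * (N : ℝ) ^ (2 - α) := by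
        rw [show 2 - α = 1 + (1 - α) by ring, Real.rpow_add (Nat.cast_pos.2 hN), Real.rpow_one]
        ring

theorem sum_crossingEdges_conductance_mul_le (hα : 1 < α) (hN : 0 < N) (hx : 2 * x ≤ N)
    {F : ℕ → ℝ} (hF : ∀ r, 0 ≤ F r) :
    ∑ e ∈ crossingEdges N x, conductance N α e * F (edgeLength N e) ≤
      4 * ∑ r ∈ Icc 1 (2 * N), (r : ℝ) ^ (1 - α) * F r +
        8 * 2 ^ α / (α - 1) * (N : ℝ) ^ (2 - α) * F N := by
  have hinner := sum_crossing_natAbs_sub_le (F := fun r => (r : ℝ) ^ (-α) * F r)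
    (fun r => mul_nonneg (by positivity) (hF r)) N x
  have houter := mul_le_mul_of_nonneg_right (sum_crossing_exterior_conductance_le hα hN hx) (hF N)
  have hpow : ∀ r ∈ Icc 1 (2 * N), (r : ℝ) * ((r : ℝ) ^ (-α) * F r) = (r : ℝ) ^ (1 - α) * F r := by
    intro r hr
    have hr : (0 : ℝ) < r := Nat.cast_pos.2 (mem_Icc.1 hr).1
    rw [← mul_assoc, sub_eq_add_neg, Real.rpow_add hr, Real.rpow_one]
  rw [sum_congr rfl hpow] at hinner
  rw [crossingEdges, sum_filter, chainEdges, sum_disjSum, ← sum_filter, ← sum_filter]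
  refine add_le_add (hinner.trans' (le_of_eq ?_)) (houter.trans' (le_of_eq ?_))
  · exact sum_congr rfl fun p _ => by
      simp only [conductance, edgeLength, Nat.cast_natAbs, Int.cast_abs]
  · rw [sum_mul]
    rfl

theorem exists_sum_crossingEdges_conductance_le (hα : 2 < α) :
    ∃ C, ∀ N x : ℕ, 0 < N → 2 * x ≤ N → ∑ e ∈ crossingEdges N x, conductance N α e ≤ C := by
  have hα₁ : 0 < α - 1 := by linarith
  refine ⟨4 * ∑' r : ℕ, (r : ℝ) ^ (-(α - 1)) + 8 * 2 ^ α / (α - 1), fun N x hN hx => ?_⟩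
  have hsum := sum_crossingEdges_conductance_mul_le (α := α) (by linarith) hN hx
    fun _ => zero_le_one
  simp only [mul_one] at hsum
  refine hsum.trans (add_le_add ?_ (mul_le_of_le_one_right (by positivity) ?_))
  · rw [← neg_sub α 1]
    exact mul_le_mul_of_nonneg_left (sum_Icc_rpow_neg_le_tsum (by linarith) _) (by norm_num)
  · exact Real.rpow_le_one_of_one_le_of_nonpos (Nat.one_le_cast.2 hN) (by linarith)

theorem exists_sum_crossingEdges_conductance_mul_edgeLength_rpow_le {t : ℝ} (hα : 1 < α)
    (ht₀ : α - 2 < t) (ht₁ : t ≤ α - 1) :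
    ∃ C > 0, ∀ N x : ℕ, 0 < N → 2 * x ≤ N →
      ∑ e ∈ crossingEdges N x, conductance N α e * (edgeLength N e : ℝ) ^ t ≤
        C * (N : ℝ) ^ (2 - α + t) := by
  have hv : 0 < 2 - α + t := by linarith
  refine ⟨4 * (2 ^ (2 - α + t) / (2 - α + t)) + 8 * 2 ^ α / (α - 1), by positivity,
    fun N x hN hx => ?_⟩
  have hpow : ∀ r ∈ Icc 1 (2 * N), (r : ℝ) ^ (1 - α) * (r : ℝ) ^ t =
      (r : ℝ) ^ (2 - α + t - 1) := fun r hr => by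
    rw [← Real.rpow_add (Nat.cast_pos.2 (mem_Icc.1 hr).1)]
    ring_nf
  have hsum := sum_crossingEdges_conductance_mul_le (F := fun r => (r : ℝ) ^ t) hα hN hx
    fun r => by positivity
  have hradial := sum_Icc_rpow_sub_one_le hv (by linarith) (2 * N)
  rw [Nat.cast_mul, Nat.cast_two, Real.mul_rpow zero_le_two (Nat.cast_nonneg N),
    mul_div_right_comm] at hradial
  rw [sum_congr rfl hpow, mul_assoc, ← Real.rpow_add (Nat.cast_pos.2 hN)] at hsum
  refine hsum.trans ?_
  rw [add_mul, mul_assoc 4]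
  gcongr

theorem card_filter_mem_crossingEdges_le (hN : 0 < N) (e : ChainEdge) :
    #{y ∈ range (N / 2 + 1) | e ∈ crossingEdges N y} ≤ edgeLength N e := by
  rcases e with ⟨i, j⟩ | i
  · have hsub : {y ∈ range (N / 2 + 1) | .inl (i, j) ∈ crossingEdges N y} ⊆
        Ico (min i.natAbs j.natAbs) (max i.natAbs j.natAbs) := by
      intro y hy
      obtain ⟨hy, hcross⟩ := mem_filter.1 hy
      have hcross := (mem_filter.1 hcross).2
      simp only [edgeGradient, AddMonoidHom.sub_apply, ChainConfig.height_plateau] at hcross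
      rw [mem_range] at hy
      rw [mem_Ico]
      grind
    refine (card_le_card hsub).trans ?_
    rw [Nat.card_Ico, edgeLength]
    lia
  · refine (card_filter_le _ _).trans ?_
    rw [card_range, edgeLength]
    lia

end CrossingEdges

/-- The scale at which the potential of an edge is smoothed: the squared height difference along an
edge of length `r` that one expects when heights fluctuate like a process with stationary
increments and variance `N ^ γ` at distance `N`. -/
noncomputable def smoothingScale (N : ℕ) (γ : ℝ) (e : ChainEdge) : ℝ :=
  1 + edgeLength N e * (N : ℝ) ^ (γ - 1)

theorem sum_sum_inter_eq_sum_card_mul {ι E : Type*} [DecidableEq E] (R : ι → Finset E)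
    (Y : Finset ι) (S : Finset E) (d : E → ℝ) :
    ∑ y ∈ Y, ∑ e ∈ S ∩ R y, d e = ∑ e ∈ S, #{y ∈ Y | e ∈ R y} * d e := by
  simp_rw [← filter_mem_eq_inter, sum_filter, sum_comm (s := Y), ← sum_filter, sum_const,
    nsmul_eq_mul]

section SmoothingScale

variable {N : ℕ} {γ t : ℝ}

theorem one_le_smoothingScale (N : ℕ) (γ : ℝ) (e : ChainEdge) : 1 ≤ smoothingScale N γ e :=
  le_add_of_nonneg_right (by positivity)

theorem smoothingScale_rpow_le (ht₀ : 0 ≤ t) (ht₁ : t ≤ 1) (N : ℕ) (γ : ℝ) (e : ChainEdge) :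
    smoothingScale N γ e ^ t ≤ 1 + (edgeLength N e : ℝ) ^ t * (N : ℝ) ^ ((γ - 1) * t) := by
  rw [smoothingScale, Real.rpow_mul N.cast_nonneg,
    ← Real.mul_rpow (Nat.cast_nonneg _) (by positivity)]
  simpa only [Real.one_rpow] using Real.rpow_add_le_add_rpow zero_le_one (by positivity) ht₀ ht₁

theorem edgeLength_mul_smoothingScale_rpow_le (ht : t ≤ 1) (hN : 0 < N) (γ : ℝ)
    (e : ChainEdge) :
    edgeLength N e * smoothingScale N γ e ^ (t - 1) ≤
      (edgeLength N e : ℝ) ^ t * (N : ℝ) ^ ((γ - 1) * (t - 1)) := by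
  rcases (edgeLength N e).eq_zero_or_pos with hr | hr
  · rw [hr, Nat.cast_zero, zero_mul]
    positivity
  have hr : (0 : ℝ) < edgeLength N e := Nat.cast_pos.2 hr
  have hN : (0 : ℝ) < N := Nat.cast_pos.2 hN
  calc edgeLength N e * smoothingScale N γ e ^ (t - 1)
      ≤ edgeLength N e * (edgeLength N e * (N : ℝ) ^ (γ - 1)) ^ (t - 1) := by
        refine mul_le_mul_of_nonneg_left ?_ hr.le
        exact Real.rpow_le_rpow_of_nonpos (by positivity) (le_add_of_nonneg_left zero_le_one)
          (by linarith)
    _ = (edgeLength N e : ℝ) ^ t * (N : ℝ) ^ ((γ - 1) * (t - 1)) := by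
        rw [Real.mul_rpow hr.le (by positivity), ← Real.rpow_mul hN.le, ← mul_assoc,
          mul_comm (edgeLength N e : ℝ), ← Real.rpow_add_one hr.ne', sub_add_cancel]

variable {α C₁ C₂ : ℝ}

theorem sum_crossingEdges_conductance_mul_smoothingScale_rpow_le {x : ℕ} (ht₀ : 0 ≤ t)
    (ht₁ : t ≤ 1) (hN : 0 < N) (hγ : γ * t = α - 2)
    (h₁ : ∑ e ∈ crossingEdges N x, conductance N α e ≤ C₁)
    (h₂ : ∑ e ∈ crossingEdges N x, conductance N α e * (edgeLength N e : ℝ) ^ t ≤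
      C₂ * (N : ℝ) ^ (2 - α + t)) :
    ∑ e ∈ crossingEdges N x, conductance N α e * smoothingScale N γ e ^ t ≤ C₁ + C₂ := by
  have hN : (0 : ℝ) < N := Nat.cast_pos.2 hN
  calc ∑ e ∈ crossingEdges N x, conductance N α e * smoothingScale N γ e ^ t
      ≤ ∑ e ∈ crossingEdges N x, conductance N α e *
          (1 + (edgeLength N e : ℝ) ^ t * (N : ℝ) ^ ((γ - 1) * t)) :=
        sum_le_sum fun e _ => mul_le_mul_of_nonneg_left (smoothingScale_rpow_le ht₀ ht₁ N γ e)
          (conductance_nonneg N α e)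
    _ = ∑ e ∈ crossingEdges N x, conductance N α e +
          (∑ e ∈ crossingEdges N x, conductance N α e * (edgeLength N e : ℝ) ^ t) *
            (N : ℝ) ^ (-(2 - α + t)) := by
        rw [sum_mul, ← sum_add_distrib, show -(2 - α + t) = (γ - 1) * t by linarith]
        exact sum_congr rfl fun e _ => by ring
    _ ≤ C₁ + C₂ * (N : ℝ) ^ (2 - α + t) * (N : ℝ) ^ (-(2 - α + t)) := by gcongr
    _ = C₁ + C₂ := by
        rw [mul_assoc, ← Real.rpow_add hN, add_neg_cancel, Real.rpow_zero, mul_one]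

theorem sum_sum_crossingEdges_inter_le {x : ℕ} (ht : t ≤ 1) (hN : 0 < N) (hγ : γ * t = α - 2)
    (h₂ : ∑ e ∈ crossingEdges N x, conductance N α e * (edgeLength N e : ℝ) ^ t ≤
      C₂ * (N : ℝ) ^ (2 - α + t)) :
    ∑ y ∈ range (N / 2 + 1), ∑ e ∈ crossingEdges N x ∩ crossingEdges N y,
      conductance N α e * smoothingScale N γ e ^ (t - 1) ≤ C₂ * (N : ℝ) ^ (1 - γ) := by
  have hN' : (0 : ℝ) < N := Nat.cast_pos.2 hN
  have hscale : ∀ e, 0 ≤ smoothingScale N γ e ^ (t - 1) := fun e =>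
    Real.rpow_nonneg (zero_le_one.trans (one_le_smoothingScale N γ e)) _
  calc _ = ∑ e ∈ crossingEdges N x, #{y ∈ range (N / 2 + 1) | e ∈ crossingEdges N y} *
          (conductance N α e * smoothingScale N γ e ^ (t - 1)) :=
        sum_sum_inter_eq_sum_card_mul _ _ _ _
    _ ≤ ∑ e ∈ crossingEdges N x, conductance N α e *
          ((edgeLength N e : ℝ) ^ t * (N : ℝ) ^ ((γ - 1) * (t - 1))) := by
        refine sum_le_sum fun e _ => ?_
        rw [mul_left_comm]
        refine mul_le_mul_of_nonneg_left ?_ (conductance_nonneg N α e)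
        exact (mul_le_mul_of_nonneg_right (mod_cast card_filter_mem_crossingEdges_le hN e)
          (hscale e)).trans (edgeLength_mul_smoothingScale_rpow_le ht hN γ e)
    _ ≤ C₂ * (N : ℝ) ^ (2 - α + t) * (N : ℝ) ^ ((γ - 1) * (t - 1)) := by
        simp_rw [← mul_assoc, ← sum_mul]
        gcongr
    _ = C₂ * (N : ℝ) ^ (1 - γ) := by
        rw [mul_assoc, ← Real.rpow_add hN']
        congr 2
        linarith

end SmoothingScale

section LowerBound

variable {N : ℕ} {β α q : ℝ}

theorem card_mul_sq_exp_neg_mul_chainZ_le {γ C₁ C₂ : ℝ} (hβ : 0 < β) (hq₀ : 0 < q) (hq₂ : q ≤ 2)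
    (hα : 1 < α) (hN : 0 < N) (hγ : γ * (q / 2) = α - 2)
    (h₁ : ∀ x, 2 * x ≤ N → ∑ e ∈ crossingEdges N x, conductance N α e ≤ C₁)
    (h₂ : ∀ x, 2 * x ≤ N →
      ∑ e ∈ crossingEdges N x, conductance N α e * (edgeLength N e : ℝ) ^ (q / 2) ≤
        C₂ * (N : ℝ) ^ (2 - α + q / 2)) :
    (N / 2 + 1 : ℕ) * Real.exp (-(β * (C₁ + C₂))) ^ 2 * chainZ N β α q ≤
      Real.exp (β * q * C₁) * (β * q * (C₂ * (N : ℝ) ^ (1 - γ))) *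
        ∑' φ : ChainConfig N, (φ.val 0 : ℝ) ^ 2 * chainWeight β α q φ.val := by
  have hX : ∀ x ∈ range (N / 2 + 1), 2 * x ≤ N := fun x hx => by rw [mem_range] at hx; lia
  have hA := one_le_smoothingScale N γ
  have hs := summable_one_add_sq_mul_chainWeight hβ hα hq₀ N
  simp only [chainZ, chainWeight_eq_prod_chainEdges hα hq₀] at hs ⊢
  have hbound := (smoothShifts_plateau (N := N) hβ.le hq₀.le hq₂ α
    (fun e => zero_lt_one.trans_le (hA e)) (range (N / 2 + 1))).card_mul_sq_exp_neg_mul_tsum_le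
    (h := (Int.castAddHom ℝ).comp (ChainConfig.height N 0)) hs
    (fun x _ => by simp [ChainConfig.height_zero_plateau]) (nonempty_range_iff.2 (by simp))
    (κ := β * (C₁ + C₂)) (M := β * q * C₁) (S := β * q * (C₂ * (N : ℝ) ^ (1 - γ))) ?_ ?_ ?_
  · rwa [card_range] at hbound
  · intro x hx
    simp_rw [mul_assoc, ← mul_sum]
    gcongr
    exact sum_crossingEdges_conductance_mul_smoothingScale_rpow_le (by linarith) (by linarith) hN
      hγ (h₁ x (hX x hx)) (h₂ x (hX x hx))
  · intro x hx
    simp_rw [mul_assoc, mul_left_comm _ q, ← mul_sum]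
    gcongr
    refine le_trans (sum_le_sum fun e _ => ?_) (h₁ x (hX x hx))
    exact mul_le_of_le_one_right (conductance_nonneg N α e)
      (Real.rpow_le_one_of_one_le_of_nonpos (hA e) (by linarith))
  · rw [← nsmul_eq_mul]
    refine sum_le_card_nsmul _ _ _ fun x hx => ?_
    simp_rw [mul_assoc, mul_left_comm _ q, ← mul_sum]
    gcongr
    exact sum_sum_crossingEdges_inter_le (by linarith) hN hγ (h₂ x (hX x hx))

theorem mul_rpow_le_chainVar {γ C₁ C₂ : ℝ} (hβ : 0 < β) (hq₀ : 0 < q) (hq₂ : q ≤ 2)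
    (hα : 1 < α) (hN : 0 < N) (hγ : γ * (q / 2) = α - 2) (hC₂ : 0 < C₂)
    (h₁ : ∀ x, 2 * x ≤ N → ∑ e ∈ crossingEdges N x, conductance N α e ≤ C₁)
    (h₂ : ∀ x, 2 * x ≤ N →
      ∑ e ∈ crossingEdges N x, conductance N α e * (edgeLength N e : ℝ) ^ (q / 2) ≤
        C₂ * (N : ℝ) ^ (2 - α + q / 2)) :
    Real.exp (-(β * (C₁ + C₂))) ^ 2 / (2 * (Real.exp (β * q * C₁) * (β * q * C₂))) *
      (N : ℝ) ^ γ ≤ chainVar N β α q := by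
  have hbound := card_mul_sq_exp_neg_mul_chainZ_le hβ hq₀ hq₂ hα hN hγ h₁ h₂
  have hZ := chainZ_pos hβ hα hq₀ N
  have hN₀ : (0 : ℝ) < N := Nat.cast_pos.2 hN
  rw [le_chainVar_iff hβ hα hq₀, div_mul_eq_mul_div, div_mul_eq_mul_div,
    div_le_iff₀ (by positivity)]
  set E := Real.exp (-(β * (C₁ + C₂))) ^ 2
  set K := Real.exp (β * q * C₁)
  set Z := chainZ N β α q
  set V := ∑' φ : ChainConfig N, (φ.val 0 : ℝ) ^ 2 * chainWeight β α q φ.val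
  have hcard : (N : ℝ) ≤ 2 * (N / 2 + 1 : ℕ) := mod_cast (by lia : N ≤ 2 * (N / 2 + 1))
  have hpow : (N : ℝ) ^ γ * (N : ℝ) ^ (1 - γ) = N := by
    rw [← Real.rpow_add hN₀, add_sub_cancel, Real.rpow_one]
  refine le_of_mul_le_mul_right ?_ (Real.rpow_pos_of_pos hN₀ (1 - γ))
  calc E * (N : ℝ) ^ γ * Z * (N : ℝ) ^ (1 - γ) = N * (E * Z) := by
        linear_combination E * Z * hpow
    _ ≤ 2 * (N / 2 + 1 : ℕ) * (E * Z) := by gcongr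
    _ ≤ V * (2 * (K * (β * q * C₂))) * (N : ℝ) ^ (1 - γ) := by linarith

theorem qSOS_chain_lower_bound_alpha_two_to_critical_general
    (hβ : 0 < β) (hq₀ : 0 < q) (hq₂ : q ≤ 2) (hα₁ : 2 < α) (hα₂ : α < 2 + q / 2) :
    ∃ c : ℝ, 0 < c ∧
      ∀ N : ℕ, 1 ≤ N → c * (N : ℝ) ^ ((2 / q) * (α - 2)) ≤ chainVar N β α q := by
  have hα : 1 < α := one_lt_two.trans hα₁
  have hγ : 2 / q * (α - 2) * (q / 2) = α - 2 := by field_simp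
  obtain ⟨C₁, h₁⟩ := exists_sum_crossingEdges_conductance_le hα₁
  obtain ⟨C₂, hC₂, h₂⟩ := exists_sum_crossingEdges_conductance_mul_edgeLength_rpow_le
    (t := q / 2) hα (by linarith) (by linarith)
  exact ⟨_, by positivity, fun N hN => mul_rpow_le_chainVar hβ hq₀ hq₂ hα hN hγ hC₂
    (fun x => h₁ N x hN) fun x => h₂ N x hN⟩

end LowerBound

/-- **Lower bound for the `q`-SOS long-range chain for `α ∈ (2, 2 + q/2)`.**
For every `β ∈ (0,∞)`, every `q ∈ (0,2)` and every `α ∈ (2, 2 + q/2)`, there exists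
`c_β > 0` such that for every `N ≥ 1`,
`c_β N^{(2/q)(α−2)} ≤ Var^{q-SOS}_{N,β,α}[φ(0)]`. -/
theorem qSOS_chain_lower_bound_alpha_two_to_critical
    (β : ℝ) (hβ : 0 < β) (q : ℝ) (hq₀ : 0 < q) (hq₂ : q < 2)
    (α : ℝ) (hα₁ : 2 < α) (hα₂ : α < 2 + q / 2) :
    ∃ c : ℝ, 0 < c ∧
      ∀ N : ℕ, 1 ≤ N →
        c * (N : ℝ) ^ ((2 / q) * (α - 2)) ≤ chainVar N β α q :=
  qSOS_chain_lower_bound_alpha_two_to_critical_general hβ hq₀ hq₂.le hα₁ hα₂
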